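/- Let Cay(D_n, S) be a Cayley graph over the dihedral group D_n (n ≥ 2), let h be an integer with 1 ≤ h ≤ ⌊(n−1)/2⌋ such that η_h(S_2) ≠ 0, and let ℓ ∈ ℂ satisfy ℓ² η_h(S_2) = η_h(S_2^{-1}). Then the vector with entry −ω^{hk} at vertex a^k and entry ℓ·ω^{hk} at vertex b a^k (0 ≤ k ≤ n−1), and the vector with entry ℓ·ω^{−hk} at a^k and entry −ω^{−hk} at b a^k, are both eigenvectors of the adjacency matrix A with eigenvalue η_h(S_1) − ℓ·η_h(S_2). -/

import Mathlib

/-!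
For a character `χ` of `ZMod n` and a set `C` of group elements, let `η_χ(C)` be the sum of `χ k`
over the `a^k ∈ C`. The vectors with entry `x * χ k` at `a^k` and `y * χ k` at `b a^k` form a
two-dimensional space on which the adjacency matrix acts, in the coordinates `(x, y)`, by
`[[η_{χ⁻¹}(S), η_χ(S₂)], [η_{χ⁻¹}(S₂), η_χ(S)]]`. Since `S = S⁻¹`, the diagonal is constant, and
`ℓ² η_χ(S₂) = η_{χ⁻¹}(S₂)` says precisely that `(-1, ℓ)` is an eigenvector of this matrix. Passing
from `χ` to `χ⁻¹` exchanges the off-diagonal entries, so that `(ℓ, -1)` is then an eigenvector for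
the same eigenvalue.
-/

open Polynomial Matrix

noncomputable section

namespace PaperPST

/-! ### Grover-walk PST data for Cayley graphs over a general finite group -/

/-- The adjacency matrix of the Cayley graph `Cay(Γ, S)`: `A u v = 1` iff `u * v⁻¹ ∈ S`. -/
def adjG (Γ : Type*) [Group Γ] [Fintype Γ] [DecidableEq Γ] (S : Finset Γ) : Matrix Γ Γ ℂ :=
  Matrix.of fun u v => if u * v⁻¹ ∈ S then 1 else 0

/-- The discriminant matrix `P = (1/|S|) A` of `Cay(Γ, S)`. -/
def discG (Γ : Type*) [Group Γ] [Fintype Γ] [DecidableEq Γ] (S : Finset Γ) : Matrix Γ Γ ℂ :=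
  (S.card : ℂ)⁻¹ • adjG Γ S

/-- `T_τ(P)`, the `τ`-th Chebyshev polynomial of the first kind evaluated at the
discriminant matrix of `Cay(Γ, S)`. -/
def chebG (Γ : Type*) [Group Γ] [Fintype Γ] [DecidableEq Γ] (S : Finset Γ) (τ : ℕ) :
    Matrix Γ Γ ℂ :=
  Polynomial.aeval (discG Γ S) (Polynomial.Chebyshev.T ℂ τ)

/-- Perfect state transfer between vertices `u` and `v` of `Cay(Γ, S)` at time `τ`:
`T_τ(P) e_u = e_v`. -/
def PSTG (Γ : Type*) [Group Γ] [Fintype Γ] [DecidableEq Γ] (S : Finset Γ) (τ : ℕ)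
    (u v : Γ) : Prop :=
  chebG Γ S τ *ᵥ Pi.single u 1 = Pi.single v 1

/-- Evaluation of the `τ`-th Chebyshev polynomial of the first kind at a complex number. -/
def Teval (τ : ℕ) (x : ℂ) : ℂ := (Polynomial.Chebyshev.T ℂ τ).eval x

/-! ### Specialization to the dihedral group `D_n` -/

/-- Test whether an element of the dihedral group is a rotation `a^k`. -/
def isRot {n : ℕ} : DihedralGroup n → Bool
  | .r _ => true
  | .sr _ => false

/-- The adjacency matrix of the Cayley graph `Cay(D_n, S)`. -/
def adjC (n : ℕ) (S : Finset (DihedralGroup n)) :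
    Matrix (DihedralGroup n) (DihedralGroup n) ℂ :=
  Matrix.of fun u v => if u * v⁻¹ ∈ S then 1 else 0

/-- The discriminant matrix `P = (1/|S|) A` of `Cay(D_n, S)`. -/
def disc (n : ℕ) (S : Finset (DihedralGroup n)) :
    Matrix (DihedralGroup n) (DihedralGroup n) ℂ :=
  (S.card : ℂ)⁻¹ • adjC n S

/-- `T_τ(P)`, the `τ`-th Chebyshev polynomial of the first kind evaluated at the
discriminant matrix. -/
def chebP (n : ℕ) [NeZero n] (S : Finset (DihedralGroup n)) (τ : ℕ) :
    Matrix (DihedralGroup n) (DihedralGroup n) ℂ :=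
  Polynomial.aeval (disc n S) (Polynomial.Chebyshev.T ℂ τ)

/-- Perfect state transfer between vertices `u` and `v` of `Cay(D_n, S)` at time `τ`:
`T_τ(P) e_u = e_v`. -/
def PST (n : ℕ) [NeZero n] (S : Finset (DihedralGroup n)) (τ : ℕ)
    (u v : DihedralGroup n) : Prop :=
  chebP n S τ *ᵥ Pi.single u 1 = Pi.single v 1

/-- `ω = e^{2πi/n}`. -/
def omega (n : ℕ) : ℂ := Complex.exp (2 * Real.pi * Complex.I / n)

/-- `η_h(C) = Σ_{0 ≤ k ≤ n-1, a^k ∈ C} ω^{hk}`. -/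
def eta (n : ℕ) (h : ℕ) (C : Finset (DihedralGroup n)) : ℂ :=
  ∑ k ∈ Finset.range n, if DihedralGroup.r (k : ZMod n) ∈ C then omega n ^ (h * k) else 0

/-- `S_1 = S ∩ ⟨a⟩`. -/
def S1 (n : ℕ) (S : Finset (DihedralGroup n)) : Finset (DihedralGroup n) :=
  S.filter fun x => isRot x

/-- `S_2 = bS ∩ ⟨a⟩`, i.e. `{a^k : b a^k ∈ S}`. -/
def S2 (n : ℕ) (S : Finset (DihedralGroup n)) : Finset (DihedralGroup n) :=
  (S.image fun s => DihedralGroup.sr 0 * s).filter fun x => isRot x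

/-- `S_2⁻¹ = {s⁻¹ : s ∈ S_2}`. -/
def S2inv (n : ℕ) (S : Finset (DihedralGroup n)) : Finset (DihedralGroup n) :=
  (S2 n S).image fun x => x⁻¹

/-- The number of `a^k ∈ C` with `0 ≤ k ≤ n-1` and `k % 2 = p`. -/
def dcnt (n : ℕ) (C : Finset (DihedralGroup n)) (p : ℕ) : ℕ :=
  ((Finset.range n).filter fun k => k % 2 = p ∧ DihedralGroup.r (k : ZMod n) ∈ C).card

/-- Vertex labels `0, …, 2n-1`: label `u < n` is `a^u`, and label `n ≤ u < 2n` is `b a^{u-n}`. -/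
def lab (n : ℕ) (u : ℕ) : DihedralGroup n :=
  if u < n then DihedralGroup.r (u : ZMod n) else DihedralGroup.sr ((u - n : ℕ) : ZMod n)

/-- `Cay(D_n, S)` is a normal Cayley graph if `S` is closed under conjugation. -/
def IsNormalCay (n : ℕ) (S : Finset (DihedralGroup n)) : Prop :=
  ∀ g : DihedralGroup n, ∀ s ∈ S, g * s * g⁻¹ ∈ S

/-- `Cay(D_n, S)` exhibits PST at the minimum time `τ`. -/
def exhibitsMinPST (n : ℕ) [NeZero n] (S : Finset (DihedralGroup n)) (τ : ℕ) : Prop :=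
  (∃ u v : DihedralGroup n, u ≠ v ∧ PST n S τ u v) ∧
  ∀ σ : ℕ, 1 ≤ σ → σ < τ → ∀ u v : DihedralGroup n, u ≠ v → ¬ PST n S σ u v

/-! ### Eigenvector candidates -/

/-- The all-ones vector. -/
def w1 (n : ℕ) : DihedralGroup n → ℂ := fun _ => 1

/-- The vector which is `1` on `G_0` and `-1` on `G_1`. -/
def w2 (n : ℕ) : DihedralGroup n → ℂ
  | .r _ => 1
  | .sr _ => -1

/-- The vector with entry `(-1)^k` at `a^k` and `(-1)^k` at `b a^k`. -/
def w3 (n : ℕ) : DihedralGroup n → ℂ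
  | .r k => (-1) ^ k.val
  | .sr k => (-1) ^ k.val

/-- The vector with entry `(-1)^k` at `a^k` and `(-1)^{k+1}` at `b a^k`. -/
def w4 (n : ℕ) : DihedralGroup n → ℂ
  | .r k => (-1) ^ k.val
  | .sr k => (-1) ^ (k.val + 1)

/-- The vector with entry `ω^{hk}` at `a^k` and `0` at `b a^k`. -/
def uv1 (n h : ℕ) : DihedralGroup n → ℂ
  | .r k => omega n ^ (h * k.val)
  | .sr _ => 0

/-- The vector with entry `0` at `a^k` and `ω^{hk}` at `b a^k`. -/
def uv2 (n h : ℕ) : DihedralGroup n → ℂ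
  | .r _ => 0
  | .sr k => omega n ^ (h * k.val)

/-- The vector with entry `0` at `a^k` and `ω^{-hk}` at `b a^k`. -/
def uv3 (n h : ℕ) : DihedralGroup n → ℂ
  | .r _ => 0
  | .sr k => (omega n)⁻¹ ^ (h * k.val)

/-- The vector with entry `ω^{-hk}` at `a^k` and `0` at `b a^k`. -/
def uv4 (n h : ℕ) : DihedralGroup n → ℂ
  | .r k => (omega n)⁻¹ ^ (h * k.val)
  | .sr _ => 0

/-- The vector with entry `conj(ℓ)·ω^{hk}` at `a^k` and `ω^{hk}` at `b a^k`. -/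
def vv1 (n h : ℕ) (ℓ : ℂ) : DihedralGroup n → ℂ
  | .r k => (starRingEnd ℂ) ℓ * omega n ^ (h * k.val)
  | .sr k => omega n ^ (h * k.val)

/-- The vector with entry `ω^{-hk}` at `a^k` and `conj(ℓ)·ω^{-hk}` at `b a^k`. -/
def vv2 (n h : ℕ) (ℓ : ℂ) : DihedralGroup n → ℂ
  | .r k => (omega n)⁻¹ ^ (h * k.val)
  | .sr k => (starRingEnd ℂ) ℓ * (omega n)⁻¹ ^ (h * k.val)

/-- The vector with entry `-ω^{hk}` at `a^k` and `ℓ·ω^{hk}` at `b a^k`. -/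
def vv3 (n h : ℕ) (ℓ : ℂ) : DihedralGroup n → ℂ
  | .r k => -(omega n ^ (h * k.val))
  | .sr k => ℓ * omega n ^ (h * k.val)

/-- The vector with entry `ℓ·ω^{-hk}` at `a^k` and `-ω^{-hk}` at `b a^k`. -/
def vv4 (n h : ℕ) (ℓ : ℂ) : DihedralGroup n → ℂ
  | .r k => ℓ * (omega n)⁻¹ ^ (h * k.val)
  | .sr k => -((omega n)⁻¹ ^ (h * k.val))

lemma r_mem_S1 {n : ℕ} {S : Finset (DihedralGroup n)} {k : ZMod n} :
    .r k ∈ S1 n S ↔ .r k ∈ S :=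
  Finset.mem_filter.trans (and_iff_left rfl)

lemma r_mem_S2 {n : ℕ} {S : Finset (DihedralGroup n)} {k : ZMod n} :
    .r k ∈ S2 n S ↔ .sr k ∈ S := by
  simp [S2, isRot]

section RotationSum

variable {n : ℕ} [NeZero n] {R : Type*} [CommSemiring R]

/-- The character sum `η_χ(C) = ∑_{a^k ∈ C} χ k` over the rotations in `C`; reflections in `C` are
ignored. For `χ k = ω^{hk}` it is `eta n h C`. -/
def rotSum (χ : AddChar (ZMod n) R) (C : Finset (DihedralGroup n)) : R :=
  ∑ k with .r k ∈ C, χ k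

lemma rotSum_S1 (χ : AddChar (ZMod n) R) (S : Finset (DihedralGroup n)) :
    rotSum χ (S1 n S) = rotSum χ S := by
  simp only [rotSum, r_mem_S1]

lemma rotSum_S2 (χ : AddChar (ZMod n) R) (S : Finset (DihedralGroup n)) :
    rotSum χ (S2 n S) = ∑ k with .sr k ∈ S, χ k := by
  simp only [rotSum, r_mem_S2]

lemma rotSum_image_inv (χ : AddChar (ZMod n) R) (C : Finset (DihedralGroup n)) :
    rotSum χ (C.image fun x => x⁻¹) = rotSum χ⁻¹ C := by
  have mem_image_inv (k : ZMod n) : .r k ∈ C.image (fun x => x⁻¹) ↔ .r (-k) ∈ C := by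
    simp [inv_eq_iff_eq_inv]
  simp only [rotSum, mem_image_inv, Finset.sum_filter]
  exact Fintype.sum_equiv (Equiv.neg _) _ _ (by simp)

lemma rotSum_inv_eq_self (χ : AddChar (ZMod n) R) {C : Finset (DihedralGroup n)}
    (hC : ∀ s ∈ C, s⁻¹ ∈ C) : rotSum χ⁻¹ C = rotSum χ C := by
  have image_inv : (C.image fun x => x⁻¹) = C :=
    Finset.eq_of_subset_of_card_le (Finset.image_subset_iff.mpr hC)
      (Finset.card_image_of_injective C inv_injective).ge
  rw [← rotSum_image_inv, image_inv]

end RotationSum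

section BlockVector

variable {n : ℕ} {R : Type*} [CommSemiring R]

/-- The vector with entry `x * χ k` at `a^k` and `y * χ k` at `b a^k`: the general element of the
block of `χ`, on which Cayley adjacency matrices of the dihedral group act by `2 × 2` matrices. -/
def blockVec (χ : AddChar (ZMod n) R) (x y : R) : DihedralGroup n → R
  | .r k => x * χ k
  | .sr k => y * χ k

lemma smul_blockVec (χ : AddChar (ZMod n) R) (c x y : R) :
    c • blockVec χ x y = blockVec χ (c * x) (c * y) := by
  ext (k | k) <;> exact (mul_assoc _ _ _).symm

lemma blockVec_eq_zero_iff (χ : AddChar (ZMod n) R) (x y : R) :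
    blockVec χ x y = 0 ↔ x = 0 ∧ y = 0 := by
  constructor
  · intro hzero
    exact ⟨by simpa [blockVec] using congrFun hzero (.r 0),
      by simpa [blockVec] using congrFun hzero (.sr 0)⟩
  · rintro ⟨rfl, rfl⟩
    ext (k | k) <;> simp [blockVec]

end BlockVector

section Adjacency

lemma adjG_mulVec_apply {Γ : Type*} [Group Γ] [Fintype Γ] [DecidableEq Γ] (S : Finset Γ)
    (v : Γ → ℂ) (u : Γ) : (adjG Γ S *ᵥ v) u = ∑ s ∈ S, v (s⁻¹ * u) := by
  calc (adjG Γ S *ᵥ v) u = ∑ w, if u * w⁻¹ ∈ S then v w else 0 := by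
        simp [mulVec, dotProduct, adjG]
    _ = ∑ s, if s ∈ S then v (s⁻¹ * u) else 0 :=
        Fintype.sum_equiv ((Equiv.inv Γ).trans (Equiv.mulLeft u)) _ _ (by simp)
    _ = ∑ s ∈ S, v (s⁻¹ * u) := by rw [Finset.sum_ite_mem, Finset.univ_inter]

variable {n : ℕ} [NeZero n]

lemma sum_dihedralGroup {M : Type*} [AddCommMonoid M] (S : Finset (DihedralGroup n))
    (f : DihedralGroup n → M) :
    ∑ s ∈ S, f s = ∑ k with .r k ∈ S, f (.r k) + ∑ k with .sr k ∈ S, f (.sr k) := by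
  calc ∑ s ∈ S, f s = ∑ s, if s ∈ S then f s else 0 := by
        rw [Finset.sum_ite_mem, Finset.univ_inter]
    _ = _ := by
        rw [← DihedralGroup.equivSum.symm.sum_comp, Fintype.sum_sum_type, Finset.sum_filter,
          Finset.sum_filter]
        rfl

lemma adjC_mulVec_blockVec (S : Finset (DihedralGroup n)) (χ : AddChar (ZMod n) ℂ) (x y : ℂ) :
    adjC n S *ᵥ blockVec χ x y =
      blockVec χ (rotSum χ⁻¹ S * x + rotSum χ (S2 n S) * y)
        (rotSum χ⁻¹ (S2 n S) * x + rotSum χ S * y) := by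
  have adjC_eq_adjG : adjC n S = adjG (DihedralGroup n) S := rfl
  ext u
  rw [adjC_eq_adjG, adjG_mulVec_apply, sum_dihedralGroup, rotSum_S2, rotSum_S2]
  rcases u with i | i
  · have rotation_term (k : ZMod n) :
        blockVec χ x y ((.r k)⁻¹ * .r i) = χ⁻¹ k * (x * χ i) := by
      simp [blockVec, AddChar.map_add_eq_mul, mul_left_comm]
    have reflection_term (k : ZMod n) :
        blockVec χ x y ((.sr k)⁻¹ * .r i) = χ k * (y * χ i) := by
      simp [blockVec, AddChar.map_add_eq_mul, mul_left_comm]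
    simp only [rotation_term, reflection_term, ← Finset.sum_mul]
    simp only [rotSum, blockVec]
    ring
  · have rotation_term (k : ZMod n) :
        blockVec χ x y ((.r k)⁻¹ * .sr i) = χ k * (y * χ i) := by
      simp [blockVec, AddChar.map_add_eq_mul, mul_left_comm, mul_comm]
    have reflection_term (k : ZMod n) :
        blockVec χ x y ((.sr k)⁻¹ * .sr i) = χ⁻¹ k * (x * χ i) := by
      simp [blockVec, sub_eq_neg_add, AddChar.map_add_eq_mul, mul_left_comm]
    simp only [rotation_term, reflection_term, ← Finset.sum_mul]
    simp only [rotSum, blockVec]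
    ring

end Adjacency

section StandardCharacter

variable (n : ℕ) [NeZero n] (h : ℕ)

lemma stdAddChar_pow_apply (k : ZMod n) :
    (ZMod.stdAddChar ^ h : AddChar (ZMod n) ℂ) k = omega n ^ (h * k.val) := by
  rw [AddChar.pow_apply, ZMod.stdAddChar_apply, ZMod.toCircle_apply, omega, ← Complex.exp_nat_mul,
    ← Complex.exp_nat_mul]
  congr 1
  push_cast
  ring

lemma eta_eq_rotSum (C : Finset (DihedralGroup n)) :
    eta n h C = rotSum (ZMod.stdAddChar ^ h) C := by
  rw [eta, rotSum, Finset.sum_filter]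
  refine Finset.sum_nbij' (fun k => (k : ZMod n)) ZMod.val (by simp) (by simp [ZMod.val_lt])
    (fun k hk => ZMod.val_cast_of_lt (Finset.mem_range.mp hk)) (by simp) fun k hk => ?_
  rw [stdAddChar_pow_apply, ZMod.val_cast_of_lt (Finset.mem_range.mp hk)]

lemma vv3_eq_blockVec (ℓ : ℂ) : vv3 n h ℓ = blockVec (ZMod.stdAddChar ^ h) (-1) ℓ := by
  ext (k | k) <;> simp only [vv3, blockVec, stdAddChar_pow_apply, neg_one_mul]

lemma vv4_eq_blockVec (ℓ : ℂ) : vv4 n h ℓ = blockVec (ZMod.stdAddChar ^ h)⁻¹ ℓ (-1) := by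
  ext (k | k) <;>
    simp only [vv4, blockVec, AddChar.inv_apply', stdAddChar_pow_apply, inv_pow, neg_one_mul]

end StandardCharacter

theorem stmt_4_general (n : ℕ) [NeZero n] (S : Finset (DihedralGroup n))
    (hSinv : ∀ s ∈ S, s⁻¹ ∈ S) (h : ℕ) (ℓ : ℂ)
    (hℓ : ℓ ^ 2 * eta n h (S2 n S) = eta n h (S2inv n S)) :
    (adjC n S *ᵥ vv3 n h ℓ =
      (eta n h (S1 n S) - ℓ * eta n h (S2 n S)) • vv3 n h ℓ ∧ vv3 n h ℓ ≠ 0) ∧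
    (adjC n S *ᵥ vv4 n h ℓ =
      (eta n h (S1 n S) - ℓ * eta n h (S2 n S)) • vv4 n h ℓ ∧ vv4 n h ℓ ≠ 0) := by
  simp only [eta_eq_rotSum, rotSum_S1, S2inv, rotSum_image_inv] at hℓ ⊢
  rw [vv3_eq_blockVec, vv4_eq_blockVec]
  refine ⟨⟨?_, by simp [blockVec_eq_zero_iff]⟩, ?_, by simp [blockVec_eq_zero_iff]⟩
  · rw [adjC_mulVec_blockVec, smul_blockVec, rotSum_inv_eq_self _ hSinv]
    congr 1
    · ring
    · linear_combination hℓ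
  · rw [adjC_mulVec_blockVec, smul_blockVec, inv_inv, rotSum_inv_eq_self _ hSinv]
    congr 1
    · linear_combination hℓ
    · ring

theorem stmt_4 (n : ℕ) [NeZero n] (hn : 2 ≤ n)
    (S : Finset (DihedralGroup n)) (hS1 : (1 : DihedralGroup n) ∉ S)
    (hSinv : ∀ s ∈ S, s⁻¹ ∈ S) (hSne : S.Nonempty)
    (h : ℕ) (hh1 : 1 ≤ h) (hh2 : h ≤ (n - 1) / 2) (hnz : eta n h (S2 n S) ≠ 0)
    (ℓ : ℂ) (hℓ : ℓ ^ 2 * eta n h (S2 n S) = eta n h (S2inv n S)) :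
    (adjC n S *ᵥ vv3 n h ℓ =
      (eta n h (S1 n S) - ℓ * eta n h (S2 n S)) • vv3 n h ℓ ∧ vv3 n h ℓ ≠ 0) ∧
    (adjC n S *ᵥ vv4 n h ℓ =
      (eta n h (S1 n S) - ℓ * eta n h (S2 n S)) • vv4 n h ℓ ∧ vv4 n h ℓ ≠ 0) :=
  stmt_4_general n S hSinv h ℓ hℓ

end PaperPST
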